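/- Let ε_∞ ≥ 0 and P_max ≥ 0, let n ≥ 1, and let (ε_t) be a decreasing sequence of reals with ε_t ≥ ε_∞ converging to ε_∞. For each t, let μ_t be a probability measure on ℝ having a density with respect to Lebesgue measure bounded almost everywhere by P_max and satisfying μ_t((−∞, ε_∞)) = 0. Then the probability under the n-fold product measure μ_t^{⊗n} that all n coordinates are ≥ ε_t tends to 1 as t → ∞. Consequently, the proportion of accepted particles (coordinates strictly below ε_t) converges in probability to 0, so the APMC algorithm stops for any choice of the stopping threshold p_acc_min > 0. -/

import Mathlib

open MeasureTheory Filter ENNReal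

/-- APMC stopping theorem: with `n` i.i.d. new particles whose distances follow a
law `μ_t` with Lebesgue density bounded a.e. by `P_max` and giving no mass below
`ε_∞`, and the tolerances `ε_t` decreasing to `ε_∞`, the probability that all `n`
distances are `≥ ε_t` (no particle accepted) tends to `1`; consequently the
proportion of accepted particles (distances `< ε_t`) converges in probability
to `0`. -/
theorem apmc_stops
    (εinf Pmax : ℝ) (hεinf : 0 ≤ εinf) (hPmax : 0 ≤ Pmax)
    (n : ℕ) (hn : 1 ≤ n)
    (ε : ℕ → ℝ) (hdec : ∀ t, ε (t + 1) ≤ ε t) (hge : ∀ t, εinf ≤ ε t)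
    (hlim : Tendsto ε atTop (nhds εinf))
    (μ : ℕ → Measure ℝ) [∀ t, IsProbabilityMeasure (μ t)]
    (f : ℕ → ℝ → ℝ≥0∞)
    (hdens : ∀ t, μ t = volume.withDensity (f t))
    (hbound : ∀ t, ∀ᵐ x ∂volume, f t x ≤ ENNReal.ofReal Pmax)
    (hsupp : ∀ t, μ t (Set.Iio εinf) = 0) :
    Tendsto
      (fun t => ((Measure.pi fun _ : Fin n => μ t)
        {x : Fin n → ℝ | ∀ i, ε t ≤ x i}).toReal) atTop (nhds 1) ∧
    ∀ δ : ℝ, 0 < δ →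
      Tendsto
        (fun t => ((Measure.pi fun _ : Fin n => μ t)
          {x : Fin n → ℝ |
            δ ≤ ((Finset.univ.filter fun i => x i < ε t).card : ℝ) / n}).toReal)
        atTop (nhds 0) := by
  have hq : ∀ t, μ t (Set.Iio (ε t)) ≤ ENNReal.ofReal Pmax * ENNReal.ofReal (ε t - εinf) := by
    intro t
    have hsub : Set.Iio (ε t) ⊆ Set.Iio εinf ∪ Set.Ico εinf (ε t) := by
      intro x hx
      rcases lt_or_ge x εinf with h | h
      · exact Or.inl h
      · exact Or.inr ⟨h, hx⟩
    have h2 : μ t (Set.Ico εinf (ε t)) ≤ ENNReal.ofReal Pmax * ENNReal.ofReal (ε t - εinf) := by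
      rw [hdens t, withDensity_apply _ measurableSet_Ico]
      calc ∫⁻ x in Set.Ico εinf (ε t), f t x
          ≤ ∫⁻ _ in Set.Ico εinf (ε t), ENNReal.ofReal Pmax :=
            lintegral_mono_ae (ae_restrict_of_ae (hbound t))
        _ = _ := by rw [setLIntegral_const, Real.volume_Ico]
    calc μ t (Set.Iio (ε t)) ≤ μ t (Set.Iio εinf ∪ Set.Ico εinf (ε t)) := measure_mono hsub
      _ ≤ μ t (Set.Iio εinf) + μ t (Set.Ico εinf (ε t)) := measure_union_le _ _
      _ ≤ _ := by rw [hsupp t, zero_add]; exact h2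
  have hq0 : Tendsto (fun t => (μ t).real (Set.Iio (ε t))) atTop (nhds 0) := by
    have hb : Tendsto (fun t => Pmax * (ε t - εinf)) atTop (nhds 0) := by
      have := (hlim.sub_const εinf).const_mul Pmax
      simpa using this
    refine squeeze_zero (fun t => measureReal_nonneg) (fun t => ?_) hb
    have h0 : 0 ≤ ε t - εinf := sub_nonneg.2 (hge t)
    rw [measureReal_def]
    refine ENNReal.toReal_le_of_le_ofReal (mul_nonneg hPmax h0) ?_
    rw [ENNReal.ofReal_mul hPmax]
    exact hq t
  have hset : ∀ t, {x : Fin n → ℝ | ∀ i, ε t ≤ x i} = Set.univ.pi fun _ => Set.Ici (ε t) := by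
    intro t; ext x; simp [Pi.le_def]
  have hA : ∀ t, ((Measure.pi fun _ : Fin n => μ t) {x : Fin n → ℝ | ∀ i, ε t ≤ x i}).toReal
      = (1 - (μ t).real (Set.Iio (ε t))) ^ n := by
    intro t
    rw [hset t, Measure.pi_pi]
    have : (μ t).real (Set.Ici (ε t)) = 1 - (μ t).real (Set.Iio (ε t)) := by
      rw [← Set.compl_Iio, probReal_compl_eq_one_sub measurableSet_Iio]
    rw [← this]; simp [measureReal_def]
  have h1 : Tendsto (fun t => ((Measure.pi fun _ : Fin n => μ t)
        {x : Fin n → ℝ | ∀ i, ε t ≤ x i}).toReal) atTop (nhds 1) := by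
    simp only [hA]
    have := (hq0.const_sub 1).pow n
    simpa using this
  refine ⟨h1, fun δ hδ => ?_⟩
  have h2 := h1.const_sub 1
  rw [sub_self] at h2
  refine squeeze_zero (fun t => ENNReal.toReal_nonneg) (fun t => ?_) h2
  have hm : MeasurableSet {x : Fin n → ℝ | ∀ i, ε t ≤ x i} := by
    rw [hset t]
    exact MeasurableSet.univ_pi fun _ => measurableSet_Ici
  have hc := probReal_compl_eq_one_sub (μ := Measure.pi fun _ : Fin n => μ t) hm
  simp only [← measureReal_def]
  rw [← hc]
  refine measureReal_mono ?_
  intro x hx hall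
  have he : (Finset.univ.filter fun i => x i < ε t) = ∅ :=
    Finset.filter_eq_empty_iff.2 fun i _ => not_lt.2 (hall i)
  simp only [Set.mem_ofPred_eq, he, Finset.card_empty, Nat.cast_zero, zero_div] at hx
  exact absurd hδ (not_lt.2 hx)
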